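/- Non-negative Cycle Lemma: there exists a polynomial P with natural-number coefficients such that for every 2-VASS V with n control states and norm M, every run of V from a (0,0)-configuration to a target configuration of norm larger than P(nM)ⁿ contains a configuration that enables a semi-positive cycle of length at most P(nM). -/

import Mathlib

/-- Integer vectors in the plane. -/
abbrev Vec2 : Type := ℤ × ℤ

/-- The norm of a vector: the maximum of the absolute values of its coordinates. -/
def vnorm (v : Vec2) : ℕ := max v.1.natAbs v.2.natAbs

/-- A vector is positive if both coordinates are positive. -/
def Pos (v : Vec2) : Prop := 0 < v.1 ∧ 0 < v.2

/-- A vector is semi-positive if both coordinates are nonnegative and one is positive. -/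
def SemiPos (v : Vec2) : Prop := 0 ≤ v.1 ∧ 0 ≤ v.2 ∧ (0 < v.1 ∨ 0 < v.2)

/-- A vector is vertical if it is of the form (0, a) with a > 0. -/
def Vert (v : Vec2) : Prop := v.1 = 0 ∧ 0 < v.2

/-- A vector is horizontal if it is of the form (a, 0) with a > 0. -/
def Horiz (v : Vec2) : Prop := 0 < v.1 ∧ v.2 = 0

/-- Embedding of integer vectors into the rational plane. -/
def toQ (v : Vec2) : ℚ × ℚ := ((v.1 : ℚ), (v.2 : ℚ))

/-- The half-line (ray) ℚ≥0 · x generated by a rational vector x. -/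
def rayQ (x : ℚ × ℚ) : Set (ℚ × ℚ) := {z | ∃ a : ℚ, 0 ≤ a ∧ z = a • x}

/-- The cone of a finite list of integer vectors: all nonnegative rational
linear combinations. -/
def Cone (vs : List Vec2) : Set (ℚ × ℚ) :=
  {x | ∃ a : Fin vs.length → ℚ, (∀ i, 0 ≤ a i) ∧ x = ∑ i, a i • toQ (vs.get i)}

/-- The sequential cone: nonnegative rational combinations all of whose
partial sums are in the nonnegative orthant. -/
def SeqCone (vs : List Vec2) : Set (ℚ × ℚ) :=
  {x | ∃ a : Fin vs.length → ℚ, (∀ i, 0 ≤ a i) ∧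
    (∀ k : ℕ, k ≤ vs.length →
      0 ≤ ∑ i : Fin vs.length, if (i : ℕ) < k then a i • toQ (vs.get i) else 0) ∧
    x = ∑ i, a i • toQ (vs.get i)}

/-- Two integer vectors are colinear if they generate the same half-line. -/
def Colinear (v w : Vec2) : Prop := rayQ (toQ v) = rayQ (toQ w)

/-- The clockwise relation on nonnegative vectors:
`Clk v u` iff u lies strictly clockwise from v. -/
def Clk (v u : Vec2) : Prop := 0 < v.2 * u.1 - v.1 * u.2

/-- Projection of a vector on coordinate `j` (`Fin 2` indexes the two coordinates). -/
def proj (j : Fin 2) (v : Vec2) : ℤ := if j = 0 then v.1 else v.2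

/-! ### 2-dimensional vector addition systems with states (2-VASS) -/

/-- A transition of a 2-VASS with control states `Fin n`:
a source state, an effect vector, and a target state. -/
abbrev Transition (n : ℕ) : Type := Fin n × Vec2 × Fin n

/-- A 2-VASS with control states `Fin n` is a finite set of transitions. -/
abbrev VASS (n : ℕ) : Type := Finset (Transition n)

/-- The norm of a 2-VASS: the largest norm of an effect of a transition. -/
def vassNorm {n : ℕ} (V : VASS n) : ℕ := V.sup (fun t => vnorm t.2.1)

/-- The effect of a sequence of transitions: the sum of the individual effects. -/
def effect {n : ℕ} (π : List (Transition n)) : Vec2 := (π.map (fun t => t.2.1)).sum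

/-- A path of `V`: a sequence of transitions of `V` in which
consecutive control states match. -/
def IsPath {n : ℕ} (V : VASS n) (π : List (Transition n)) : Prop :=
  (∀ t ∈ π, t ∈ V) ∧ π.Chain' (fun s t => s.2.2 = t.1)

/-- The path `π` starts at control state `q` (vacuously true for the empty path). -/
def startsAt {n : ℕ} (π : List (Transition n)) (q : Fin n) : Prop :=
  ∀ t ∈ π.head?, t.1 = q

/-- The control state after the first `i` transitions of `π`, for a path
starting at control state `q`. -/
def stateAt {n : ℕ} (π : List (Transition n)) (q : Fin n) (i : ℕ) : Fin n :=
  (((π.take i).getLast?).map (fun t => t.2.2)).getD q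

/-- The final control state of a path `π` starting at control state `q`. -/
def endState {n : ℕ} (π : List (Transition n)) (q : Fin n) : Fin n := stateAt π q π.length

/-- The counter values after the first `i` transitions of `π`, starting from
counter values `u`. -/
def vecAt {n : ℕ} (π : List (Transition n)) (u : Vec2) (i : ℕ) : Vec2 :=
  u + effect (π.take i)

/-- The path `π` is enabled in the configuration `(q, u)`: it starts at `q`
and all intermediate counter values are nonnegative. -/
def Enabled {n : ℕ} (π : List (Transition n)) (q : Fin n) (u : Vec2) : Prop :=
  startsAt π q ∧ ∀ i ≤ π.length, 0 ≤ vecAt π u i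

/-- For `j ∈ {1,2}`, the path `π` is `{j}`-enabled in the configuration `(q, u)`:
it starts at `q` and the `j`-th coordinate of all intermediate counter values is
nonnegative. -/
def JEnabled {n : ℕ} (π : List (Transition n)) (q : Fin n) (u : Vec2) (j : Fin 2) : Prop :=
  startsAt π q ∧ ∀ i ≤ π.length, 0 ≤ proj j (vecAt π u i)

/-- A run of `V`: a path of `V` enabled in the configuration `(q, u)`.
Its source is `(q, u)`, its target is `(endState π q, vecAt π u π.length)`,
and its configurations are `(stateAt π q i, vecAt π u i)` for `i ≤ π.length`. -/
def IsRun {n : ℕ} (V : VASS n) (π : List (Transition n)) (q : Fin n) (u : Vec2) : Prop :=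
  IsPath V π ∧ Enabled π q u

/-- A (0,0)-run of `V`: a run whose source and target counter values are `(0,0)`. -/
def IsZeroRun {n : ℕ} (V : VASS n) (π : List (Transition n)) (q : Fin n) : Prop :=
  IsRun V π q 0 ∧ effect π = 0

/-- A cycle of `V`: a nonempty path of `V` whose starting and ending control
states coincide. -/
def IsCycle {n : ℕ} (V : VASS n) (γ : List (Transition n)) : Prop :=
  IsPath V γ ∧ γ ≠ [] ∧ γ.head?.map (fun t => t.1) = γ.getLast?.map (fun t => t.2.2)

/-! ### Walks in quotients of the configuration graph -/

section Walks

variable {n : ℕ} {G : Type*} [AddCommGroup G]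

/-- One step along a transition, where only the image of the counters under `φ` is recorded. -/
def walkStep (φ : Vec2 →+ G) (a : Fin n × G) (t : Transition n) : Fin n × G :=
  (t.2.2, a.2 + φ t.2.1)

/-- The endpoint of the walk along `l` from `a`. -/
def dest (φ : Vec2 →+ G) (a : Fin n × G) (l : List (Transition n)) : Fin n × G :=
  l.foldl (walkStep φ) a

/-- `l` is a path of `V` from `a`, all of whose vertices satisfy `Q`, in the graph that records
the control state and the image of the counters under `φ`. -/
def Walk (V : VASS n) (φ : Vec2 →+ G) (Q : Fin n × G → Prop) :
    Fin n × G → List (Transition n) → Prop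
  | a, [] => Q a
  | a, t :: l => Q a ∧ t ∈ V ∧ t.1 = a.1 ∧ Walk V φ Q (walkStep φ a t) l

variable {V : VASS n} {φ : Vec2 →+ G} {Q : Fin n × G → Prop}

@[simp] lemma dest_nil (a : Fin n × G) : dest φ a [] = a := rfl

@[simp] lemma dest_cons (a : Fin n × G) (t : Transition n) (l : List (Transition n)) :
    dest φ a (t :: l) = dest φ (walkStep φ a t) l := rfl

lemma dest_append (a : Fin n × G) (l₁ l₂ : List (Transition n)) :
    dest φ a (l₁ ++ l₂) = dest φ (dest φ a l₁) l₂ := List.foldl_append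

@[simp] lemma effect_nil : effect ([] : List (Transition n)) = 0 := rfl

@[simp] lemma effect_cons (t : Transition n) (l : List (Transition n)) :
    effect (t :: l) = t.2.1 + effect l := by simp [effect]

lemma effect_append (l₁ l₂ : List (Transition n)) :
    effect (l₁ ++ l₂) = effect l₁ + effect l₂ := by simp [effect]

lemma dest_snd (a : Fin n × G) (l : List (Transition n)) :
    (dest φ a l).2 = a.2 + φ (effect l) := by
  induction l generalizing a with
  | nil => simp
  | cons t l ih => simp [ih, walkStep, add_assoc]

lemma dest_fst (a : Fin n × G) (l : List (Transition n)) :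
    (dest φ a l).1 = (l.getLast?.map (fun t => t.2.2)).getD a.1 := by
  induction l using List.reverseRecOn with
  | nil => simp
  | append_singleton l t => simp [dest_append, walkStep]

lemma Walk.source {a : Fin n × G} {l : List (Transition n)} (h : Walk V φ Q a l) : Q a := by
  cases l with
  | nil => exact h
  | cons t l => exact h.1

lemma walk_append {a : Fin n × G} {l₁ l₂ : List (Transition n)} :
    Walk V φ Q a (l₁ ++ l₂) ↔ Walk V φ Q a l₁ ∧ Walk V φ Q (dest φ a l₁) l₂ := by
  induction l₁ generalizing a with
  | nil => exact ⟨fun h => ⟨h.source, h⟩, fun h => h.2⟩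
  | cons t l ih => simp [Walk, ih, and_assoc]

lemma Walk.target {a : Fin n × G} {l : List (Transition n)} (h : Walk V φ Q a l) :
    Q (dest φ a l) := by
  rw [← List.append_nil l, walk_append] at h
  exact h.2.source

lemma Walk.take {a : Fin n × G} {l : List (Transition n)} (h : Walk V φ Q a l) (i : ℕ) :
    Walk V φ Q a (l.take i) := by
  rw [← List.take_append_drop i l, walk_append] at h
  exact h.1

lemma Walk.subset {a : Fin n × G} {l : List (Transition n)} (h : Walk V φ Q a l) :
    ∀ t ∈ l, t ∈ V := by
  induction l generalizing a with
  | nil => simp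
  | cons s l ih =>
    intro t ht
    rcases List.mem_cons.1 ht with rfl | ht
    · exact h.2.1
    · exact ih h.2.2.2 t ht

lemma Walk.map {H : Type*} [AddCommGroup H] (ψ : G →+ H) {Q' : Fin n × H → Prop}
    {a : Fin n × G} {l : List (Transition n)} (h : Walk V φ Q a l)
    (hQ : ∀ i, Q (dest φ a (l.take i)) →
      Q' ((dest φ a (l.take i)).1, ψ (dest φ a (l.take i)).2)) :
    Walk V (ψ.comp φ) Q' (a.1, ψ a.2) l := by
  induction l generalizing a with
  | nil => exact hQ 0 h
  | cons t l ih =>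
    refine ⟨hQ 0 h.1, h.2.1, h.2.2.1, ?_⟩
    have := ih h.2.2.2 (fun i => hQ (i + 1))
    simpa [walkStep] using this

lemma Walk.mono {Q' : Fin n × G → Prop} (hQ : ∀ a, Q a → Q' a) {a : Fin n × G}
    {l : List (Transition n)} (h : Walk V φ Q a l) : Walk V φ Q' a l := by
  induction l generalizing a with
  | nil => exact hQ _ h
  | cons t l ih => exact ⟨hQ _ h.1, h.2.1, h.2.2.1, ih h.2.2.2⟩

lemma Walk.and {Q' : Fin n × G → Prop} {a : Fin n × G} {l : List (Transition n)}
    (h : Walk V φ Q a l) (h' : Walk V φ Q' a l) : Walk V φ (fun b => Q b ∧ Q' b) a l := by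
  induction l generalizing a with
  | nil => exact ⟨h, h'⟩
  | cons t l ih => exact ⟨⟨h.1, h'.1⟩, h.2.1, h.2.2.1, ih h.2.2.2 h'.2.2.2⟩

lemma Walk.of_take {Q' : Fin n × G → Prop} {a : Fin n × G} {l : List (Transition n)}
    (h : Walk V φ Q a l) (h' : ∀ i, Q' (dest φ a (l.take i))) : Walk V φ Q' a l := by
  induction l generalizing a with
  | nil => exact h' 0
  | cons t l ih => exact ⟨h' 0, h.2.1, h.2.2.1, ih h.2.2.2 fun i => h' (i + 1)⟩

/-- The same path, with the control state as the only information recorded. -/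
lemma Walk.forget {S : Set (Fin n)} {a : Fin n × G} {l : List (Transition n)}
    (h : Walk V φ Q a l) (hQ : ∀ b, Q b → b.1 ∈ S) :
    Walk V (0 : Vec2 →+ Unit) (fun b => b.1 ∈ S) (a.1, ()) l := by
  have := h.map (0 : G →+ Unit) (Q' := fun b => b.1 ∈ S) (fun i hi => hQ _ hi)
  simpa using this

lemma Walk.isPath {a : Fin n × G} {l : List (Transition n)} (h : Walk V φ Q a l) :
    IsPath V l := by
  refine ⟨h.subset, ?_⟩
  induction l generalizing a with
  | nil => exact List.isChain_nil
  | cons t l ih =>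
    have := ih h.2.2.2
    cases l with
    | nil => exact List.isChain_singleton _
    | cons s l => exact List.isChain_cons_cons.2 ⟨h.2.2.2.2.2.1.symm, this⟩

lemma Walk.startsAt {a : Fin n × G} {l : List (Transition n)} (h : Walk V φ Q a l) :
    startsAt l a.1 := by
  cases l with
  | nil => simp [_root_.startsAt]
  | cons t l => simpa [_root_.startsAt] using h.2.2.1

lemma Walk.of_isPath {a : Fin n × G} {l : List (Transition n)} (h : IsPath V l)
    (hs : _root_.startsAt l a.1) (hQ : ∀ i ≤ l.length, Q (dest φ a (l.take i))) :
    Walk V φ Q a l := by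
  induction l generalizing a with
  | nil => exact hQ 0 le_rfl
  | cons t l ih =>
    refine ⟨hQ 0 (Nat.zero_le _), h.1 t (by simp), hs t (by simp), ?_⟩
    refine ih ⟨fun s hs => h.1 s (by simp [hs]), ?_⟩ ?_ ?_
    · exact List.IsChain.tail h.2
    · intro s hs
      cases l with
      | nil => simp at hs
      | cons r l =>
        have := (List.isChain_cons_cons.1 h.2).1
        simp only [List.head?_cons, Option.mem_def, Option.some.injEq] at hs
        simp [walkStep, ← hs, this]
    · exact fun i hi => hQ (i + 1) (by simpa using hi)

lemma walk_replicate {a : Fin n × G} {l : List (Transition n)} (h : Walk V φ Q a l)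
    (hl : dest φ a l = a) (k : ℕ) :
    Walk V φ Q a (List.replicate k l).flatten ∧ dest φ a (List.replicate k l).flatten = a := by
  induction k with
  | zero => exact ⟨h.source, rfl⟩
  | succ k ih =>
    simp only [List.replicate_succ, List.flatten_cons, walk_append, dest_append, hl]
    exact ⟨⟨h, ih.1⟩, ih.2⟩

lemma effect_replicate (l : List (Transition n)) (k : ℕ) :
    effect (List.replicate k l).flatten = k • effect l := by
  induction k with
  | zero => simp
  | succ k ih =>
    rw [List.replicate_succ, List.flatten_cons, effect_append, ih, succ_nsmul, add_comm]

/-- A walk that is at least as long as the number of available vertices contains a short cycle. -/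
lemma Walk.exists_cycle {T : Finset (Fin n × G)} (hT : ∀ a, Q a → a ∈ T) {a : Fin n × G}
    {l : List (Transition n)} (h : Walk V φ Q a l) (hl : T.card ≤ l.length) :
    ∃ l₁ l₂ l₃, l = l₁ ++ l₂ ++ l₃ ∧ l₂ ≠ [] ∧ l₂.length ≤ T.card ∧
      dest φ (dest φ a l₁) l₂ = dest φ a l₁ := by
  classical
  obtain ⟨i, hi, j, hj, hij, heq⟩ := Finset.exists_ne_map_eq_of_card_lt_of_maps_to
    (s := Finset.range (T.card + 1)) (t := T) (by simp)
    (f := fun i => dest φ a (l.take i)) (fun i _ => hT _ (h.take i).target)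
  wlog hlt : i < j generalizing i j
  · exact this j hj i hi hij.symm heq.symm (lt_of_le_of_ne (not_lt.1 hlt) hij.symm)
  simp only [Finset.mem_range] at hi hj
  have hsplit : l.take j = l.take i ++ (l.take j).drop i := by
    conv_lhs => rw [← List.take_append_drop i (l.take j)]
    rw [List.take_take, min_eq_left hlt.le]
  refine ⟨l.take i, (l.take j).drop i, l.drop j, ?_, ?_, ?_, ?_⟩
  · rw [← hsplit, List.take_append_drop]
  · intro h0
    have := congrArg List.length h0
    simp at this
    omega
  · simp
    omega
  · rw [← dest_append, ← hsplit]
    exact heq.symm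

/-- If short cycles have nonpositive weight then the weight of walks is bounded. -/
lemma Walk.weight_le {T : Finset (Fin n × G)} (hT : ∀ a, Q a → a ∈ T) (w : Vec2 →+ ℤ) {W : ℤ}
    (hW : 0 ≤ W) (hw : ∀ t ∈ V, w t.2.1 ≤ W)
    (hcyc : ∀ a l, Walk V φ Q a l → dest φ a l = a → l ≠ [] → l.length ≤ T.card →
      w (effect l) ≤ 0)
    {a : Fin n × G} {l : List (Transition n)} (h : Walk V φ Q a l) :
    w (effect l) ≤ T.card * W := by
  induction hk : l.length using Nat.strong_induction_on generalizing l with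
  | _ k ih =>
  rcases le_or_gt T.card l.length with hl | hl
  · obtain ⟨l₁, l₂, l₃, rfl, hne, hlen, hd⟩ := h.exists_cycle hT hl
    rw [walk_append, walk_append, dest_append, hd] at h
    have h1 := ih (l₁ ++ l₃).length (by
      have := List.length_pos_iff.2 hne
      simp at hk ⊢
      omega) (walk_append.2 ⟨h.1.1, h.2⟩) rfl
    have h2 := hcyc _ _ h.1.2 hd hne hlen
    simp only [effect_append, map_add] at h1 ⊢
    linarith
  · have key : ∀ l : List (Transition n), (∀ t ∈ l, t ∈ V) → w (effect l) ≤ l.length * W := by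
      intro l
      induction l with
      | nil => simp
      | cons t l ih' =>
        intro hl
        have h1 := ih' fun s hs => hl s (by simp [hs])
        have h2 := hw t (hl t (by simp))
        simp only [effect_cons, map_add, List.length_cons, Nat.cast_add, Nat.cast_one]
        linarith
    refine (key l h.subset).trans (mul_le_mul_of_nonneg_right ?_ hW)
    exact_mod_cast hl.le

/-- A walk can be shortened, keeping its endpoints. -/
lemma Walk.shorten {T : Finset (Fin n × G)} (hT : ∀ a, Q a → a ∈ T)
    {a : Fin n × G} {l : List (Transition n)} (h : Walk V φ Q a l) :
    ∃ l', Walk V φ Q a l' ∧ dest φ a l' = dest φ a l ∧ l'.length ≤ T.card := by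
  induction hk : l.length using Nat.strong_induction_on generalizing l with
  | _ k ih =>
  rcases le_or_gt T.card l.length with hl | hl
  · obtain ⟨l₁, l₂, l₃, rfl, hne, hlen, hd⟩ := h.exists_cycle hT hl
    rw [walk_append, walk_append, dest_append, hd] at h
    obtain ⟨l', h1, h2, h3⟩ := ih (l₁ ++ l₃).length (by
      have := List.length_pos_iff.2 hne
      simp at hk ⊢
      omega) (walk_append.2 ⟨h.1.1, h.2⟩) rfl
    refine ⟨l', h1, ?_, h3⟩
    rw [h2, dest_append, dest_append, dest_append, hd]
  · exact ⟨l, h, rfl, hl.le⟩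

/-- Splitting a walk just after the last vertex satisfying `R`. -/
lemma Walk.split_last (R : Fin n × G → Prop) {a : Fin n × G} {l : List (Transition n)}
    (h : Walk V φ Q a l) (hR : ¬ R (dest φ a l)) :
    ∃ l₁ l₂, l = l₁ ++ l₂ ∧ Walk V φ (fun b => Q b ∧ ¬ R b) (dest φ a l₁) l₂ ∧
      (l₁ = [] ∨ ∃ l₀ t, l₁ = l₀ ++ [t] ∧ R (dest φ a l₀)) := by
  induction l generalizing a with
  | nil => exact ⟨[], [], rfl, ⟨h, hR⟩, Or.inl rfl⟩
  | cons t l ih =>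
    obtain ⟨l₁, l₂, rfl, hw, hl⟩ := ih h.2.2.2 hR
    rcases hl with rfl | ⟨l₀, s, rfl, hs⟩
    · by_cases ha : R a
      · exact ⟨[t], l₂, rfl, hw, Or.inr ⟨[], t, rfl, ha⟩⟩
      · exact ⟨[], t :: l₂, rfl, ⟨⟨h.1, ha⟩, h.2.1, h.2.2.1, hw⟩, Or.inl rfl⟩
    · exact ⟨t :: (l₀ ++ [s]), l₂, rfl, hw, Or.inr ⟨t :: l₀, s, rfl, hs⟩⟩

/-- Splitting a walk at the first vertex satisfying `R`. -/
lemma Walk.split_first (R : Fin n × G → Prop) {a : Fin n × G} {l : List (Transition n)}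
    (h : Walk V φ Q a l) :
    Walk V φ (fun b => Q b ∧ ¬ R b) a l ∨
    ∃ l₁ l₂, l = l₁ ++ l₂ ∧ R (dest φ a l₁) ∧
      (l₁ = [] ∨ ∃ l₀ t, l₁ = l₀ ++ [t] ∧ Walk V φ (fun b => Q b ∧ ¬ R b) a l₀) := by
  induction l generalizing a with
  | nil =>
    by_cases ha : R a
    · exact Or.inr ⟨[], [], rfl, ha, Or.inl rfl⟩
    · exact Or.inl ⟨h, ha⟩
  | cons t l ih =>
    by_cases ha : R a
    · exact Or.inr ⟨[], t :: l, rfl, ha, Or.inl rfl⟩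
    rcases ih h.2.2.2 with hw | ⟨l₁, l₂, rfl, hR, hl⟩
    · exact Or.inl ⟨⟨h.1, ha⟩, h.2.1, h.2.2.1, hw⟩
    · refine Or.inr ⟨t :: l₁, l₂, rfl, hR, Or.inr ?_⟩
      rcases hl with rfl | ⟨l₀, s, rfl, hs⟩
      · exact ⟨[], t, rfl, h.1, ha⟩
      · exact ⟨t :: l₀, s, rfl, ⟨h.1, ha⟩, h.2.1, h.2.2.1, hs⟩

end Walks

/-! ### Cones of cycle effects -/

/-- Either two vectors of `E` have a strictly positive combination, or `E` touches the quadrant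
along exactly one axis, or `E` lies below a line with negative slope. -/
lemma cone_trichotomy (E : Set Vec2) (K : ℕ) (hK : 1 ≤ K)
    (hE : ∀ v ∈ E, |v.1| ≤ K ∧ |v.2| ≤ K) :
    (∃ c ∈ E, ∃ d ∈ E, ∃ i j : ℕ, i ≤ 2 * K ∧ j ≤ 2 * K ∧
      0 < i * c.1 + j * d.1 ∧ 0 < i * c.2 + j * d.2) ∨
    ((∃ c ∈ E, 0 < c.1 ∧ c.2 = 0) ∧ ∀ v ∈ E, v.2 ≤ 0) ∨
    ((∃ c ∈ E, 0 < c.2 ∧ c.1 = 0) ∧ ∀ v ∈ E, v.1 ≤ 0) ∨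
    ∃ a b : ℤ, 1 ≤ a ∧ a ≤ K ∧ 1 ≤ b ∧ b ≤ K ∧ ∀ v ∈ E, a * v.1 + b * v.2 ≤ 0 := by
  by_cases hpos : ∃ c ∈ E, ∃ d ∈ E, ∃ i j : ℕ, i ≤ 2 * K ∧ j ≤ 2 * K ∧
      0 < i * c.1 + j * d.1 ∧ 0 < i * c.2 + j * d.2
  · exact Or.inl hpos
  refine Or.inr ?_
  have hpos' : ∀ c ∈ E, ∀ d ∈ E, ∀ i j : ℤ, 0 ≤ i → 0 ≤ j → i ≤ 2 * K → j ≤ 2 * K →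
      0 < i * c.1 + j * d.1 → 0 < i * c.2 + j * d.2 → False := by
    intro c hc d hd i j hi hj hi' hj' h1 h2
    lift i to ℕ using hi
    lift j to ℕ using hj
    exact hpos ⟨c, hc, d, hd, i, j, by exact_mod_cast hi', by exact_mod_cast hj', h1, h2⟩
  clear hpos
  have hK' : (1 : ℤ) ≤ K := by exact_mod_cast hK
  have hsingle : ∀ c ∈ E, 0 < c.1 → 0 < c.2 → False := fun c hc h1 h2 =>
    hpos' c hc c hc 1 0 (by simp) (by simp) (by linarith) (by linarith) (by simpa) (by simpa)
  by_cases hx : ∃ c ∈ E, 0 < c.1 ∧ c.2 = 0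
  · refine Or.inl ⟨hx, fun v hv => ?_⟩
    obtain ⟨c, hc, hc1, hc2⟩ := hx
    by_contra! hv2
    have hb := (abs_le.1 (hE v hv).1).1
    refine hpos' c hc v hv (K + 1) 1 (by linarith) (by simp) (by linarith) (by linarith) ?_ ?_
    · nlinarith
    · rw [hc2]; simpa
  refine Or.inr ?_
  by_cases hy : ∃ c ∈ E, 0 < c.2 ∧ c.1 = 0
  · refine Or.inl ⟨hy, fun v hv => ?_⟩
    obtain ⟨c, hc, hc1, hc2⟩ := hy
    by_contra! hv2
    have hb := (abs_le.1 (hE v hv).2).1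
    refine hpos' c hc v hv (K + 1) 1 (by linarith) (by simp) (by linarith) (by linarith) ?_ ?_
    · rw [hc2]; simpa
    · nlinarith
  refine Or.inr ?_
  push Not at hx hy
  by_cases hr : ∃ c ∈ E, 0 < c.1
  · have hfin : {c ∈ E | 0 < c.1}.Finite := by
      refine (Set.finite_Icc ((-K, -K) : Vec2) (K, K)).subset ?_
      rintro c ⟨hc, -⟩
      have := hE c hc
      rw [abs_le, abs_le] at this
      exact ⟨⟨this.1.1, this.2.1⟩, ⟨this.1.2, this.2.2⟩⟩
    obtain ⟨c, ⟨hc, hc1⟩, hmax⟩ := Set.exists_max_image {c ∈ E | 0 < c.1}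
      (fun c => (c.2 : ℚ) / c.1) hfin hr
    have hc2 : c.2 < 0 := lt_of_le_of_ne (not_lt.1 (hsingle c hc hc1)) (hx c hc hc1)
    have hcb := hE c hc
    rw [abs_le, abs_le] at hcb
    refine ⟨-c.2, c.1, by linarith, by linarith, by linarith, by linarith, fun v hv => ?_⟩
    have hvb := hE v hv
    rw [abs_le, abs_le] at hvb
    rcases lt_or_ge 0 v.1 with hv1 | hv1
    · have := hmax v ⟨hv, hv1⟩
      rw [div_le_div_iff₀ (by exact_mod_cast hv1) (by exact_mod_cast hc1)] at this
      have h' : v.2 * c.1 ≤ c.2 * v.1 := by exact_mod_cast this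
      linarith
    · rcases lt_or_ge 0 v.2 with hv2 | hv2
      · by_contra! hlt
        refine hpos' c hc v hv (v.2 - v.1) (c.1 - c.2) (by linarith) (by linarith) (by linarith)
          (by linarith) ?_ ?_ <;> nlinarith
      · nlinarith
  · push Not at hr
    refine ⟨K, 1, hK', le_rfl, le_rfl, hK', fun v hv => ?_⟩
    have hvb := hE v hv
    rw [abs_le, abs_le] at hvb
    have h1 := hr v hv
    rcases lt_or_ge 0 v.2 with hv2 | hv2
    · have := hy v hv hv2
      have : v.1 ≤ -1 := by omega
      nlinarith
    · nlinarith

/-! ### Configurations enabling semi-positive cycles -/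

section Pumping

variable {n : ℕ}

/-- `X` and `Y` are the two coordinates, in one of the two orders. -/
def IsCoordPair (X Y : Vec2 →+ ℤ) : Prop :=
  (X = AddMonoidHom.fst ℤ ℤ ∧ Y = AddMonoidHom.snd ℤ ℤ) ∨
    (X = AddMonoidHom.snd ℤ ℤ ∧ Y = AddMonoidHom.fst ℤ ℤ)

namespace IsCoordPair

variable {X Y : Vec2 →+ ℤ}

lemma symm (h : IsCoordPair X Y) : IsCoordPair Y X := by
  rcases h with ⟨rfl, rfl⟩ | ⟨rfl, rfl⟩
  exacts [Or.inr ⟨rfl, rfl⟩, Or.inl ⟨rfl, rfl⟩]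

lemma nonneg_iff (h : IsCoordPair X Y) {v : Vec2} : 0 ≤ v ↔ 0 ≤ X v ∧ 0 ≤ Y v := by
  rcases h with ⟨rfl, rfl⟩ | ⟨rfl, rfl⟩ <;> simp [Prod.le_def, and_comm]

lemma semiPos (h : IsCoordPair X Y) {v : Vec2} (hX : 0 < X v) (hY : 0 ≤ Y v) : SemiPos v := by
  rcases h with ⟨rfl, rfl⟩ | ⟨rfl, rfl⟩
  · exact ⟨hX.le, hY, Or.inl hX⟩
  · exact ⟨hY, hX.le, Or.inr hX⟩

lemma abs_le_vnorm (h : IsCoordPair X Y) (v : Vec2) : |X v| ≤ vnorm v := by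
  rcases h with ⟨rfl, rfl⟩ | ⟨rfl, rfl⟩ <;> simp [vnorm]

lemma abs_transition_le (h : IsCoordPair X Y) {V : VASS n} {t : Transition n} (ht : t ∈ V) :
    |X t.2.1| ≤ vassNorm V :=
  (h.abs_le_vnorm _).trans (by
    exact_mod_cast Finset.le_sup (f := fun t : Transition n => vnorm t.2.1) ht)

lemma abs_effect_le (h : IsCoordPair X Y) {V : VASS n} {l : List (Transition n)}
    (hl : ∀ t ∈ l, t ∈ V) : |X (effect l)| ≤ l.length * vassNorm V := by
  induction l with
  | nil => simp
  | cons t l ih =>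
    have h1 := ih fun s hs => hl s (by simp [hs])
    have h2 := h.abs_transition_le (hl t (by simp))
    have h3 := abs_add_le (X t.2.1) (X (effect l))
    simp only [effect_cons, map_add, List.length_cons, Nat.cast_add, Nat.cast_one]
    linarith

lemma neg_le_effect_take (h : IsCoordPair X Y) {V : VASS n} {l : List (Transition n)} {L : ℕ}
    (hl : ∀ t ∈ l, t ∈ V) (hL : l.length ≤ L) (i : ℕ) :
    -((L : ℤ) * vassNorm V) ≤ X (effect (l.take i)) := by
  have h1 := (abs_le.1 (h.abs_effect_le (V := V) (l := l.take i)
    fun t ht => hl t (List.mem_of_mem_take ht))).1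
  have h2 : ((l.take i).length : ℤ) ≤ L := by
    exact_mod_cast (List.length_take_le' i l).trans hL
  nlinarith [Int.natCast_nonneg (vassNorm V)]

end IsCoordPair

/-- The configuration `c` enables a semi-positive cycle of length at most `L`. -/
def EnablesPump (V : VASS n) (L : ℕ) (c : Fin n × Vec2) : Prop :=
  ∃ γ, IsCycle V γ ∧ Enabled γ c.1 c.2 ∧ SemiPos (effect γ) ∧ γ.length ≤ L

variable {V : VASS n} {X Y : Vec2 →+ ℤ}

lemma EnablesPump.of_walk {G : Type*} [AddCommGroup G] {φ : Vec2 →+ G} {Q : Fin n × G → Prop}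
    {a : Fin n × G} {γ : List (Transition n)} {L : ℕ} {c : Fin n × Vec2} (hXY : IsCoordPair X Y)
    (h : Walk V φ Q a γ) (hd : (dest φ a γ).1 = a.1) (hc : c.1 = a.1)
    (hX : ∀ i, 0 ≤ X c.2 + X (effect (γ.take i))) (hY : ∀ i, 0 ≤ Y c.2 + Y (effect (γ.take i)))
    (heX : 0 < X (effect γ)) (heY : 0 ≤ Y (effect γ)) (hL : γ.length ≤ L) :
    EnablesPump V L c := by
  have hne : γ ≠ [] := by rintro rfl; simp at heX
  refine ⟨γ, ⟨h.isPath, hne, ?_⟩, ⟨hc ▸ h.startsAt, fun i _ => ?_⟩, hXY.semiPos heX heY, hL⟩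
  · rw [dest_fst] at hd
    cases γ with
    | nil => exact absurd rfl hne
    | cons t l =>
      rw [List.getLast?_eq_some_getLast hne] at hd ⊢
      simp only [Option.map_some, Option.getD_some] at hd
      simp [h.2.2.1, hd]
  · rw [vecAt, hXY.nonneg_iff, map_add, map_add]
    exact ⟨hX i, hY i⟩

/-- If `Y` is bounded whenever `X` is large, then `X` grows only by an additive constant. -/
lemma Walk.belt_le (hXY : IsCoordPair X Y) {L B : ℕ} (hB : n * B ≤ L)
    {Q : Fin n × Vec2 → Prop} (hQ : ∀ c, Q c → 0 ≤ c.2 ∧ ¬ EnablesPump V L c)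
    (hQB : ∀ c, Q c → (L : ℤ) * vassNorm V ≤ X c.2 → Y c.2 < B)
    {c : Fin n × Vec2} {l : List (Transition n)}
    (h : Walk V (AddMonoidHom.id _) Q c l) :
    X (dest (AddMonoidHom.id _) c l).2 ≤
      max (X c.2) (L * vassNorm V + vassNorm V) + L * vassNorm V := by
  obtain ⟨M, hM⟩ : ∃ M : ℤ, M = vassNorm V := ⟨_, rfl⟩
  rw [← hM]
  rw [← hM] at hQB
  have hM0 : 0 ≤ M := hM ▸ Int.natCast_nonneg _
  have hLM : 0 ≤ L * M := by positivity
  rcases lt_or_ge (X (dest (AddMonoidHom.id _) c l).2) (L * M) with hlt | hge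
  · have := le_max_right (X c.2) (L * M + M)
    linarith
  obtain ⟨l₁, l₂, rfl, hw, hl₁⟩ := h.split_last (fun c => X c.2 < L * M) (not_lt.2 hge)
  have hstart : X (dest (AddMonoidHom.id _) c l₁).2 ≤ max (X c.2) (L * M + M) := by
    rcases hl₁ with rfl | ⟨l₀, t, rfl, ht⟩
    · exact le_max_left _ _
    · refine le_trans ?_ (le_max_right _ _)
      rw [walk_append, walk_append] at h
      have := (abs_le.1 (hXY.abs_transition_le h.1.2.2.1)).2
      simp only [dest_append, dest_cons, dest_nil, walkStep, AddMonoidHom.id_apply, map_add]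
      linarith
  rw [dest_append, dest_snd, map_add, AddMonoidHom.id_apply]
  suffices hX : X (effect l₂) ≤ L * M by linarith
  have hw' := hw.map Y (Q' := fun b => ∃ c' : Fin n × Vec2,
    (Q c' ∧ ¬ X c'.2 < L * M) ∧ b = (c'.1, Y c'.2)) (fun i hi => ⟨_, hi, rfl⟩)
  have key := hw'.weight_le (T := Finset.univ ×ˢ Finset.Ico (0 : ℤ) B) ?_ X hM0
    (fun t ht => hM ▸ (abs_le.1 (hXY.abs_transition_le ht)).2) ?_
  · refine key.trans (mul_le_mul_of_nonneg_right ?_ hM0)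
    simpa using (by exact_mod_cast hB : (n : ℤ) * B ≤ L)
  · rintro _ ⟨c', ⟨hc', hX'⟩, rfl⟩
    simp only [Finset.mem_product, Finset.mem_univ, Finset.mem_Ico, true_and]
    exact ⟨(hXY.nonneg_iff.1 (hQ c' hc').1).2, hQB c' hc' (not_lt.1 hX')⟩
  · intro a γ hγ hd hne hlen
    by_contra! hpos
    obtain ⟨c', ⟨hc', hX'⟩, rfl⟩ := hγ.source
    have hlen' : γ.length ≤ L := hlen.trans (by simpa using hB)
    refine (hQ c' hc').2 (EnablesPump.of_walk hXY hγ (by rw [hd]) rfl ?_ ?_ hpos ?_ hlen')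
    · intro i
      have := hXY.neg_le_effect_take hγ.subset hlen' i
      rw [← hM] at this
      linarith
    · intro i
      obtain ⟨c'', ⟨hc'', -⟩, heq⟩ := (hγ.take i).target
      have h2 := congrArg Prod.snd heq
      rw [dest_snd] at h2
      simp only [AddMonoidHom.comp_apply, AddMonoidHom.id_apply] at h2
      rw [h2]
      exact (hXY.nonneg_iff.1 (hQ c'' hc'').1).2
    · have h2 := congrArg Prod.snd hd
      rw [dest_snd] at h2
      simp only [AddMonoidHom.comp_apply, AddMonoidHom.id_apply, add_eq_left] at h2
      exact h2.ge

/-- The path `l` is a cycle on `r`, of length at most the number of states, with all its states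
in `S`. -/
def ShortCycle (V : VASS n) (S : Finset (Fin n)) (r : Fin n) (l : List (Transition n)) : Prop :=
  Walk V (0 : Vec2 →+ Unit) (fun b => b.1 ∈ S) (r, ()) l ∧
    (dest (0 : Vec2 →+ Unit) (r, ()) l).1 = r ∧ l ≠ [] ∧ l.length ≤ n

variable {S : Finset (Fin n)}

lemma Walk.functional_le {Q : Fin n × Vec2 → Prop} (hQ : ∀ c, Q c → c.1 ∈ S) (w : Vec2 →+ ℤ)
    {W : ℤ} (hW : 0 ≤ W) (hw : ∀ t ∈ V, w t.2.1 ≤ W)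
    (hcyc : ∀ r l, ShortCycle V S r l → w (effect l) ≤ 0)
    {c : Fin n × Vec2} {l : List (Transition n)} (h : Walk V (AddMonoidHom.id _) Q c l) :
    w (effect l) ≤ n * W := by
  have h' := h.forget (S := (S : Set (Fin n))) hQ
  have := h'.weight_le (T := Finset.univ) (fun a _ => Finset.mem_univ a) w hW hw
    (fun a l hl hd hne hlen => hcyc a.1 l ⟨hl, by simpa using congrArg Prod.fst hd, hne,
      by simpa using hlen⟩)
  simpa using this

lemma ShortCycle.enablesPump {r : Fin n} {γ : List (Transition n)} (hγ : ShortCycle V S r γ)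
    (hXY : IsCoordPair X Y) {L : ℕ} (hL : n ≤ L) (heX : 0 < X (effect γ))
    (heY : Y (effect γ) = 0) {c : Fin n × Vec2} (hc : c.1 = r)
    (hX : (n : ℤ) * vassNorm V ≤ X c.2) (hY : (n : ℤ) * vassNorm V ≤ Y c.2) :
    EnablesPump V L c := by
  obtain ⟨hw, hd, hne, hlen⟩ := hγ
  refine EnablesPump.of_walk hXY hw hd hc (fun i => ?_) (fun i => ?_) heX heY.ge (hlen.trans hL)
  · linarith [hXY.neg_le_effect_take hw.subset hlen i]
  · linarith [hXY.symm.neg_le_effect_take hw.subset hlen i]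

/-- Every two states of `S` are connected by a path inside `S`. -/
def StronglyConnected (V : VASS n) (S : Finset (Fin n)) : Prop :=
  ∀ p ∈ S, ∀ r ∈ S, ∃ l, Walk V (0 : Vec2 →+ Unit) (fun b => b.1 ∈ S) (p, ()) l ∧
    (dest (0 : Vec2 →+ Unit) (p, ()) l).1 = r

lemma StronglyConnected.exists_short (h : StronglyConnected V S) {p r : Fin n} (hp : p ∈ S)
    (hr : r ∈ S) : ∃ l, Walk V (0 : Vec2 →+ Unit) (fun b => b.1 ∈ S) (p, ()) l ∧
      dest (0 : Vec2 →+ Unit) (p, ()) l = (r, ()) ∧ l.length ≤ n := by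
  obtain ⟨l, hl, hd⟩ := h p hp r hr
  obtain ⟨l', h1, h2, h3⟩ := hl.shorten (T := Finset.univ) (fun a _ => Finset.mem_univ a)
  exact ⟨l', h1, by rw [h2]; exact Prod.ext hd rfl, by simpa using h3⟩

/-- Two short cycles with a strictly positive combination can be assembled into a cycle through
any given state. -/
lemma StronglyConnected.enablesPump (h : StronglyConnected V S) {K L : ℕ}
    (hK : K = n * vassNorm V) (hL : 3 * n + 4 * K * (3 * K + 1) * n ≤ L)
    {r s : Fin n} {γ δ : List (Transition n)} (hγ : ShortCycle V S r γ) (hδ : ShortCycle V S s δ)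
    {i j : ℕ} (hi : i ≤ 2 * K) (hj : j ≤ 2 * K) (hXY : IsCoordPair X Y)
    (hX : 0 < i * X (effect γ) + j * X (effect δ)) (hY : 0 < i * Y (effect γ) + j * Y (effect δ))
    {c : Fin n × Vec2} (hc : c.1 ∈ S)
    (hcX : (L : ℤ) * vassNorm V ≤ X c.2) (hcY : (L : ℤ) * vassNorm V ≤ Y c.2) :
    EnablesPump V L c := by
  obtain ⟨l₁, hw₁, hd₁, hl₁⟩ := h.exists_short hc hγ.1.source
  obtain ⟨l₂, hw₂, hd₂, hl₂⟩ := h.exists_short hγ.1.source hδ.1.source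
  obtain ⟨l₃, hw₃, hd₃, hl₃⟩ := h.exists_short hδ.1.source hc
  obtain ⟨hwγ, hdγ⟩ := walk_replicate hγ.1 (Prod.ext hγ.2.1 rfl) (i * (3 * K + 1))
  obtain ⟨hwδ, hdδ⟩ := walk_replicate hδ.1 (Prod.ext hδ.2.1 rfl) (j * (3 * K + 1))
  set P := l₁ ++ (List.replicate (i * (3 * K + 1)) γ).flatten ++ l₂ ++
    (List.replicate (j * (3 * K + 1)) δ).flatten ++ l₃ with hP
  have hw : Walk V (0 : Vec2 →+ Unit) (fun b => b.1 ∈ S) (c.1, ()) P := by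
    simp only [hP, walk_append, dest_append, hd₁, hdγ, hd₂, hdδ]
    exact ⟨⟨⟨⟨hw₁, hwγ⟩, hw₂⟩, hwδ⟩, hw₃⟩
  have hd : dest (0 : Vec2 →+ Unit) (c.1, ()) P = (c.1, ()) := by
    simp only [hP, dest_append, hd₁, hdγ, hd₂, hdδ, hd₃]
  have hlen : P.length ≤ L := by
    refine le_trans ?_ hL
    simp only [hP, List.length_append, List.length_flatten, List.map_replicate, List.sum_replicate,
      smul_eq_mul]
    have h1 : i * (3 * K + 1) * γ.length ≤ 2 * K * (3 * K + 1) * n := by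
      gcongr
      exact hγ.2.2.2
    have h2 : j * (3 * K + 1) * δ.length ≤ 2 * K * (3 * K + 1) * n := by
      gcongr
      exact hδ.2.2.2
    linarith
  have hKM : (K : ℤ) = n * vassNorm V := by exact_mod_cast hK
  have hsmall : ∀ {Z W : Vec2 →+ ℤ}, IsCoordPair Z W → ∀ l : List (Transition n),
      (∀ t ∈ l, t ∈ V) → l.length ≤ n → -(K : ℤ) ≤ Z (effect l) := by
    intro Z W hZW l hl hn
    have := hZW.neg_le_effect_take hl hn l.length
    rwa [List.take_length, ← hKM] at this
  have hpos : ∀ {Z W : Vec2 →+ ℤ}, IsCoordPair Z W →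
      0 < i * Z (effect γ) + j * Z (effect δ) → 0 < Z (effect P) := by
    intro Z W hZW hZ
    have e₁ := hsmall hZW l₁ hw₁.subset hl₁
    have e₂ := hsmall hZW l₂ hw₂.subset hl₂
    have e₃ := hsmall hZW l₃ hw₃.subset hl₃
    simp only [hP, effect_append, effect_replicate, map_add, map_nsmul]
    simp only [nsmul_eq_mul]
    push_cast
    have hK0 : (0 : ℤ) ≤ K := Int.natCast_nonneg _
    nlinarith [mul_le_mul_of_nonneg_left (Int.add_one_le_of_lt hZ)
      (by linarith : 0 ≤ 3 * (K : ℤ) + 1)]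
  refine EnablesPump.of_walk hXY hw (by rw [hd]) rfl (fun k => ?_) (fun k => ?_)
    (hpos hXY hX) (hpos hXY.symm hY).le hlen
  · linarith [hXY.neg_le_effect_take hw.subset hlen k]
  · linarith [hXY.symm.neg_le_effect_take hw.subset hlen k]

/-! ### Growth of runs without short semi-positive cycles -/

/-- The larger one of the two coordinates. -/
def coordMax (v : Vec2) : ℤ := max v.1 v.2

namespace IsCoordPair

lemma le_coordMax (h : IsCoordPair X Y) (v : Vec2) : X v ≤ coordMax v := by
  rcases h with ⟨rfl, rfl⟩ | ⟨rfl, rfl⟩ <;> simp [coordMax]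

lemma coordMax_le_iff (h : IsCoordPair X Y) {v : Vec2} {N : ℤ} :
    coordMax v ≤ N ↔ X v ≤ N ∧ Y v ≤ N := by
  rcases h with ⟨rfl, rfl⟩ | ⟨rfl, rfl⟩ <;> simp [coordMax, and_comm]

lemma fst_snd : IsCoordPair (AddMonoidHom.fst ℤ ℤ) (AddMonoidHom.snd ℤ ℤ) := Or.inl ⟨rfl, rfl⟩

end IsCoordPair

lemma coordMax_nonneg {v : Vec2} (h : 0 ≤ v) : 0 ≤ coordMax v := le_max_of_le_left h.1

lemma coordMax_walkStep_le {t : Transition n} (ht : t ∈ V) (c : Fin n × Vec2) :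
    coordMax (walkStep (AddMonoidHom.id _) c t).2 ≤ coordMax c.2 + vassNorm V := by
  have h1 := (abs_le.1 (IsCoordPair.fst_snd.abs_transition_le ht)).2
  have h2 := (abs_le.1 (IsCoordPair.fst_snd.symm.abs_transition_le ht)).2
  have h3 := IsCoordPair.fst_snd.le_coordMax c.2
  have h4 := IsCoordPair.fst_snd.symm.le_coordMax c.2
  rw [IsCoordPair.fst_snd.coordMax_le_iff]
  simp only [walkStep, AddMonoidHom.id_apply, map_add]
  constructor <;> linarith

/-- The configurations with control state in `S` that do not enable a semi-positive cycle of
length at most `L`. -/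
def Unpumped (V : VASS n) (L : ℕ) (S : Finset (Fin n)) (c : Fin n × Vec2) : Prop :=
  c.1 ∈ S ∧ 0 ≤ c.2 ∧ ¬ EnablesPump V L c

variable {K L : ℕ} {c : Fin n × Vec2} {l : List (Transition n)}

lemma Walk.growth_of_functional (hK : K = n * vassNorm V) {a b : ℤ} (ha : 1 ≤ a) (haK : a ≤ K)
    (hb : 1 ≤ b) (hbK : b ≤ K)
    (hcyc : ∀ r γ, ShortCycle V S r γ → a * (effect γ).1 + b * (effect γ).2 ≤ 0)
    (h : Walk V (AddMonoidHom.id _) (Unpumped V L S) c l) :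
    coordMax (dest (AddMonoidHom.id _) c l).2 ≤ 2 * K * coordMax c.2 + 2 * K * K := by
  have hM0 : (0 : ℤ) ≤ vassNorm V := Int.natCast_nonneg _
  have key := h.functional_le (S := S) (fun c hc => hc.1)
    (a • AddMonoidHom.fst ℤ ℤ + b • AddMonoidHom.snd ℤ ℤ) (W := 2 * K * vassNorm V)
    (by positivity) (fun t ht => ?_) (fun r γ hγ => by simpa using hcyc r γ hγ)
  · have hKM : (n : ℤ) * vassNorm V = K := by rw [hK]; push_cast; rfl
    have hc := h.source.2.1
    have hd := h.target.2.1
    rw [dest_snd] at hd ⊢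
    simp only [AddMonoidHom.id_apply, AddMonoidHom.add_apply, AddMonoidHom.smul_apply,
      AddMonoidHom.coe_fst, AddMonoidHom.coe_snd, smul_eq_mul] at key hd ⊢
    obtain ⟨hc1, hc2⟩ := hc
    obtain ⟨hd1, hd2⟩ := hd
    simp only [Prod.fst_zero, Prod.snd_zero, Prod.fst_add, Prod.snd_add] at hc1 hc2 hd1 hd2
    have h1 : c.2.1 ≤ coordMax c.2 := le_max_left _ _
    have h2 : c.2.2 ≤ coordMax c.2 := le_max_right _ _
    have h3 : (n : ℤ) * (2 * K * vassNorm V) = 2 * K * K := by linear_combination 2 * K * hKM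
    rw [h3] at key
    have h4 : a * c.2.1 ≤ K * coordMax c.2 := mul_le_mul haK h1 hc1 (by linarith)
    have h5 : b * c.2.2 ≤ K * coordMax c.2 := mul_le_mul hbK h2 hc2 (by linarith)
    refine max_le ?_ ?_ <;> simp only [Prod.fst_add, Prod.snd_add] <;> nlinarith
  · have h1 := abs_le.1 (IsCoordPair.fst_snd.abs_transition_le ht)
    have h2 := abs_le.1 (IsCoordPair.fst_snd.symm.abs_transition_le ht)
    simp only [AddMonoidHom.coe_fst, AddMonoidHom.coe_snd] at h1 h2
    simp only [AddMonoidHom.add_apply, AddMonoidHom.smul_apply,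
      AddMonoidHom.coe_fst, AddMonoidHom.coe_snd, smul_eq_mul]
    have h3 : a * t.2.1.1 ≤ K * vassNorm V :=
      (mul_le_mul_of_nonneg_left h1.2 (by linarith)).trans (mul_le_mul_of_nonneg_right haK hM0)
    have h4 : b * t.2.1.2 ≤ K * vassNorm V :=
      (mul_le_mul_of_nonneg_left h2.2 (by linarith)).trans (mul_le_mul_of_nonneg_right hbK hM0)
    linarith

lemma Walk.growth_of_positive (hS : StronglyConnected V S) (hK : K = n * vassNorm V) {L₁ : ℕ}
    (hL₁ : 3 * n + 4 * K * (3 * K + 1) * n ≤ L₁) (hL₁L : L₁ ≤ L) (hL : n * (L₁ * vassNorm V) ≤ L)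
    {r s : Fin n} {γ δ : List (Transition n)} (hγ : ShortCycle V S r γ) (hδ : ShortCycle V S s δ)
    {i j : ℕ} (hi : i ≤ 2 * K) (hj : j ≤ 2 * K)
    (h1 : 0 < i * (effect γ).1 + j * (effect δ).1) (h2 : 0 < i * (effect γ).2 + j * (effect δ).2)
    (h : Walk V (AddMonoidHom.id _) (Unpumped V L S) c l) :
    coordMax (dest (AddMonoidHom.id _) c l).2 ≤
      coordMax c.2 + 2 * L * vassNorm V + vassNorm V := by
  have hM0 : (0 : ℤ) ≤ vassNorm V := Int.natCast_nonneg _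
  have hLM : (L₁ : ℤ) * vassNorm V ≤ L * vassNorm V :=
    mul_le_mul_of_nonneg_right (by exact_mod_cast hL₁L) hM0
  have hc0 := coordMax_nonneg h.source.2.1
  have key : ∀ {X Y : Vec2 →+ ℤ}, IsCoordPair X Y → 0 < i * X (effect γ) + j * X (effect δ) →
      0 < i * Y (effect γ) + j * Y (effect δ) → X (dest (AddMonoidHom.id _) c l).2 ≤
        coordMax c.2 + 2 * L * vassNorm V + vassNorm V := by
    intro X Y hXY hX hY
    have := h.belt_le hXY hL (fun c hc => hc.2) (fun c hc hcX => ?_)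
    · have hc := hXY.le_coordMax c.2
      rcases max_cases (X c.2) (L * vassNorm V + vassNorm V) with h' | h' <;> nlinarith
    · by_contra! hcY
      push_cast at hcY
      obtain ⟨ρ, hρ₁, hρ₂, hρ₃, hρ₄⟩ := hS.enablesPump hK hL₁ hγ hδ hi hj hXY hX hY hc.1
        (hLM.trans hcX) hcY
      exact hc.2.2 ⟨ρ, hρ₁, hρ₂, hρ₃, hρ₄.trans hL₁L⟩
  rw [IsCoordPair.fst_snd.coordMax_le_iff]
  exact ⟨key IsCoordPair.fst_snd h1 h2, key IsCoordPair.fst_snd.symm h2 h1⟩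

lemma Walk.growth_of_axis (hXY : IsCoordPair X Y) (hK : K = n * vassNorm V) (hnL : n ≤ L)
    (hL : n * (2 * K) ≤ L) {r : Fin n} {γ : List (Transition n)} (hγ : ShortCycle V S r γ)
    (hγX : 0 < X (effect γ)) (hγY : Y (effect γ) = 0)
    (hcyc : ∀ s δ, ShortCycle V S s δ → Y (effect δ) ≤ 0) {F : ℤ → ℤ} (hF : Monotone F)
    (hrec : ∀ c l, Walk V (AddMonoidHom.id _) (Unpumped V L (S.erase r)) c l →
      coordMax (dest (AddMonoidHom.id _) c l).2 ≤ F (coordMax c.2))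
    (h : Walk V (AddMonoidHom.id _) (Unpumped V L S) c l) :
    coordMax (dest (AddMonoidHom.id _) c l).2 ≤
      max (F (coordMax c.2 + K + vassNorm V)) (coordMax c.2 + K + vassNorm V) +
        2 * L * vassNorm V + 2 * vassNorm V := by
  have hKM : (n : ℤ) * vassNorm V = K := by rw [hK]; push_cast; rfl
  have hM0 : (0 : ℤ) ≤ vassNorm V := Int.natCast_nonneg _
  have hLM0 : (0 : ℤ) ≤ L * vassNorm V := by positivity
  have hK0 : (0 : ℤ) ≤ K := Int.natCast_nonneg _
  have hc0 := coordMax_nonneg h.source.2.1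
  have hYle : ∀ {c l}, Walk V (AddMonoidHom.id _) (Unpumped V L S) c l →
      Y (dest (AddMonoidHom.id _) c l).2 ≤ Y c.2 + K := by
    intro c l h
    have := h.functional_le (S := S) (fun c hc => hc.1) Y hM0
      (fun t ht => (abs_le.1 (hXY.symm.abs_transition_le ht)).2) hcyc
    rw [dest_snd, map_add, AddMonoidHom.id_apply]
    linarith
  have hYc := hXY.symm.le_coordMax c.2
  generalize hN : coordMax c.2 + K + vassNorm V = N
  have hmaxF := le_max_left (F N) N
  have hmaxN := le_max_right (F N) N
  have hYd := hYle h
  rw [hXY.coordMax_le_iff]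
  refine ⟨?_, by linarith⟩
  rcases lt_or_ge (X (dest (AddMonoidHom.id _) c l).2) K with hlt | hge
  · linarith
  obtain ⟨l₁, l₂, rfl, hw, hl₁⟩ := h.split_last (fun c => X c.2 < K) (not_lt.2 hge)
  have hstart : coordMax (dest (AddMonoidHom.id _) c l₁).2 ≤ N := by
    rcases hl₁ with rfl | ⟨l₀, t, rfl, ht⟩
    · rw [dest_nil]; linarith
    · rw [walk_append, walk_append] at h
      have h1 := coordMax_walkStep_le h.1.2.2.1 (dest (AddMonoidHom.id _) c l₀)
      have h2 := hYle h.1.1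
      have h3 : coordMax (dest (AddMonoidHom.id _) c l₀).2 ≤ coordMax c.2 + K :=
        hXY.coordMax_le_iff.2 ⟨by linarith, by linarith⟩
      rw [dest_append]
      simp only [dest_cons, dest_nil]
      linarith
  have havoid : ∀ b : Fin n × Vec2, ((Unpumped V L S b ∧ ¬ X b.2 < K) ∧ ¬ Y b.2 < K) →
      Unpumped V L (S.erase r) b := by
    rintro b ⟨⟨hb, hbX⟩, hbY⟩
    refine ⟨Finset.mem_erase.2 ⟨fun hbr => hb.2.2 ?_, hb.1⟩, hb.2⟩
    exact hγ.enablesPump hXY hnL hγX hγY hbr (by linarith) (by linarith)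
  rw [dest_append]
  rcases hw.split_first (fun c => Y c.2 < K) with hw' | ⟨m₁, m₂, rfl, hYm, hm⟩
  · have h1 := hrec _ _ (hw'.mono havoid)
    have h2 := hXY.le_coordMax (dest (AddMonoidHom.id _) (dest (AddMonoidHom.id _) c l₁) l₂).2
    have h3 := hF hstart
    linarith
  · rw [walk_append] at hw
    rw [dest_append]
    have hmid : X (dest (AddMonoidHom.id _) (dest (AddMonoidHom.id _) c l₁) m₁).2 ≤
        max (F N) N + vassNorm V := by
      refine (hXY.le_coordMax _).trans ?_
      rcases hm with rfl | ⟨m₀, t, rfl, hm₀⟩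
      · rw [dest_nil]; linarith
      · have h1 := hrec _ _ (hm₀.mono havoid)
        have h2 := hF hstart
        rw [walk_append] at hw
        have h3 := coordMax_walkStep_le hw.1.2.2.1
          (dest (AddMonoidHom.id _) (dest (AddMonoidHom.id _) c l₁) m₀)
        rw [dest_append]
        simp only [dest_cons, dest_nil]
        linarith
    have hm₂ := hw.2.mono (Q' := Unpumped V L S) fun b hb => hb.1
    have hbelt := (hm₂.and (hm₂.of_take (Q' := fun b => Y b.2 < (2 * K : ℕ)) fun i => by
      have := hYle (hm₂.take i)
      push_cast
      linarith)).belt_le hXY hL (fun b hb => hb.1.2) (fun b hb _ => hb.2)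
    have hX0 := (hXY.nonneg_iff.1 hm₂.source.2.1).1
    rcases max_cases (X (dest (AddMonoidHom.id _) (dest (AddMonoidHom.id _) c l₁) m₁).2)
      (L * vassNorm V + vassNorm V) with h' | h' <;> linarith

/-- A run without configurations that enable short semi-positive cycles increases the norm at most
by a factor exponential in the number of states. -/
lemma Walk.growth (hK : K = n * vassNorm V) (hK1 : 1 ≤ K) {L₁ : ℕ}
    (hL₁ : 3 * n + 4 * K * (3 * K + 1) * n ≤ L₁) (hL₁L : L₁ ≤ L) (hL : n * (L₁ * vassNorm V) ≤ L)
    (hL2 : n * (2 * K) ≤ L) {D : ℤ} (hD : 2 * L * vassNorm V + 3 * vassNorm V + K ≤ D)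
    (hD2 : 2 * K * K ≤ D) (S : Finset (Fin n)) :
    ∀ {c l}, Walk V (AddMonoidHom.id _) (Unpumped V L S) c l →
      coordMax (dest (AddMonoidHom.id _) c l).2 + 2 * D ≤
        (2 * K + 3) ^ S.card * (coordMax c.2 + D) := by
  classical
  induction S using Finset.strongInduction with
  | H S ih =>
  intro c l h
  have hM0 : (0 : ℤ) ≤ vassNorm V := Int.natCast_nonneg _
  have hLM0 : (0 : ℤ) ≤ L * vassNorm V := by positivity
  have hK1' : (1 : ℤ) ≤ K := by exact_mod_cast hK1
  have hc0 := coordMax_nonneg h.source.2.1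
  have hD0 : 0 ≤ D := by linarith
  have hpow1 : ∀ k : ℕ, (1 : ℤ) ≤ (2 * K + 3) ^ k := fun k => one_le_pow₀ (by linarith)
  have hcard : ∃ k, S.card = k + 1 :=
    Nat.exists_eq_succ_of_ne_zero (Finset.card_ne_zero_of_mem h.source.1)
  obtain ⟨k, hk⟩ := hcard
  by_cases hS : StronglyConnected V S
  · have hlinear : ∀ m : ℤ, m ≤ 2 * K * coordMax c.2 + coordMax c.2 + D →
        m + 2 * D ≤ (2 * K + 3) ^ S.card * (coordMax c.2 + D) := by
      intro m hm
      have h1 : (2 * K + 3) * (coordMax c.2 + D) ≤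
          (2 * K + 3) ^ S.card * (coordMax c.2 + D) := by
        rw [hk, pow_succ']
        refine mul_le_mul_of_nonneg_right ?_ (by linarith)
        exact le_mul_of_one_le_right (by linarith) (hpow1 k)
      nlinarith
    have hKc : 0 ≤ K * coordMax c.2 := by positivity
    have haxis : ∀ {X Y : Vec2 →+ ℤ}, IsCoordPair X Y →
        (∃ v ∈ {v | ∃ r γ, ShortCycle V S r γ ∧ effect γ = v}, 0 < X v ∧ Y v = 0) →
        (∀ v ∈ {v | ∃ r γ, ShortCycle V S r γ ∧ effect γ = v}, Y v ≤ 0) →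
        coordMax (dest (AddMonoidHom.id _) c l).2 + 2 * D ≤
          (2 * K + 3) ^ S.card * (coordMax c.2 + D) := by
      rintro X Y hXY ⟨_, ⟨r, γ, hγ, rfl⟩, hX, hY⟩ hcyc
      have hr : r ∈ S := hγ.1.source
      have hbound := h.growth_of_axis hXY hK (by nlinarith) hL2 hγ hX hY
        (fun s δ hδ => hcyc _ ⟨s, δ, hδ, rfl⟩)
        (F := fun N => (2 * K + 3) ^ k * (N + D) - 2 * D)
        (fun N N' hN => by
          have : (0 : ℤ) ≤ (2 * K + 3) ^ k := by positivity
          simp only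
          gcongr)
        (fun c l hw => by
          have := ih _ (Finset.erase_ssubset hr) hw
          rw [Finset.card_erase_of_mem hr, hk, Nat.add_sub_cancel] at this
          linarith)
      rcases max_cases ((2 * (K : ℤ) + 3) ^ k * (coordMax c.2 + K + vassNorm V + D) - 2 * D)
        (coordMax c.2 + K + vassNorm V) with h' | h'
      · rw [h'.1] at hbound
        rw [hk, pow_succ]
        have hp := hpow1 k
        generalize (2 * (K : ℤ) + 3) ^ k = p at *
        have h1 : p * (coordMax c.2 + K + vassNorm V + D) + D ≤ p * (coordMax c.2 + 3 * D) := by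
          nlinarith
        have h2 : p * (coordMax c.2 + 3 * D) ≤ p * ((2 * K + 3) * (coordMax c.2 + D)) :=
          mul_le_mul_of_nonneg_left (by nlinarith) (by linarith)
        nlinarith
      · rw [h'.1] at hbound
        refine hlinear _ ?_
        nlinarith
    have hcone := cone_trichotomy {v | ∃ r γ, ShortCycle V S r γ ∧ effect γ = v} K hK1 (by
      rintro _ ⟨r, γ, hγ, rfl⟩
      have hle : (γ.length : ℤ) * vassNorm V ≤ K := by
        rw [hK]; push_cast
        exact mul_le_mul_of_nonneg_right (by exact_mod_cast hγ.2.2.2) hM0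
      exact ⟨(IsCoordPair.fst_snd.abs_effect_le hγ.1.subset).trans hle,
        (IsCoordPair.fst_snd.symm.abs_effect_le hγ.1.subset).trans hle⟩)
    rcases hcone with ⟨_, ⟨r, γ, hγ, rfl⟩, _, ⟨s, δ, hδ, rfl⟩, i, j, hi, hj, h1, h2⟩ |
      ⟨h1, h2⟩ | ⟨h1, h2⟩ | ⟨a, b, ha, haK, hb, hbK, hcyc⟩
    · refine hlinear _ ?_
      have := h.growth_of_positive hS hK hL₁ hL₁L hL hγ hδ hi hj h1 h2
      nlinarith
    · exact haxis IsCoordPair.fst_snd h1 h2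
    · exact haxis IsCoordPair.fst_snd.symm h1 h2
    · refine hlinear _ ?_
      have := h.growth_of_functional hK ha haK hb hbK (fun r γ hγ => hcyc _ ⟨r, γ, hγ, rfl⟩)
      linarith
  · unfold StronglyConnected at hS
    push Not at hS
    obtain ⟨p, hp, r, hr, hpr⟩ := hS
    set R := S.filter fun s => ∃ l, Walk V (0 : Vec2 →+ Unit) (fun b => b.1 ∈ S) (p, ()) l ∧
      (dest (0 : Vec2 →+ Unit) (p, ()) l).1 = s
    have hRS : R ⊂ S := by
      refine (Finset.ssubset_iff_of_subset (Finset.filter_subset _ _)).2 ⟨r, hr, fun hr' => ?_⟩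
      obtain ⟨-, l, hl, hd⟩ := Finset.mem_filter.1 hr'
      exact hpr l hl hd
    have hpR : p ∈ R := Finset.mem_filter.2 ⟨hp, [], hp, rfl⟩
    have hRS' : S \ R ⊂ S :=
      Finset.sdiff_ssubset hRS.subset ⟨p, hpR⟩
    have hclosed : ∀ {c l}, Walk V (AddMonoidHom.id _) (Unpumped V L S) c l → c.1 ∈ R →
        Walk V (AddMonoidHom.id _) (Unpumped V L R) c l := by
      intro c l
      induction l generalizing c with
      | nil => exact fun hw hc => ⟨hc, hw.2⟩
      | cons t l ihl =>
        intro hw hc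
        refine ⟨⟨hc, hw.1.2⟩, hw.2.1, hw.2.2.1, ihl hw.2.2.2 ?_⟩
        obtain ⟨-, m, hm, hd⟩ := Finset.mem_filter.1 hc
        refine Finset.mem_filter.2 ⟨hw.2.2.2.source.1, m ++ [t], walk_append.2 ⟨hm, hm.target,
          hw.2.1, hw.2.2.1.trans hd.symm, hw.2.2.2.source.1⟩, ?_⟩
        rw [dest_append]
        rfl
    have hpow : (2 * (K : ℤ) + 3) ^ S.card = (2 * K + 3) ^ R.card * (2 * K + 3) ^ (S \ R).card := by
      rw [← pow_add, add_comm R.card, Finset.card_sdiff_add_card_eq_card hRS.subset]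
    have hp₁ := hpow1 R.card
    have hp₂ := hpow1 (S \ R).card
    have hcD : 0 ≤ coordMax c.2 + D := by linarith
    have hsdiff : ∀ b : Fin n × Vec2, (Unpumped V L S b ∧ ¬ b.1 ∈ R) → Unpumped V L (S \ R) b :=
      fun b hb => ⟨Finset.mem_sdiff.2 ⟨hb.1.1, hb.2⟩, hb.1.2⟩
    rw [hpow]
    rcases h.split_first (fun b => b.1 ∈ R) with hw | ⟨l₁, l₂, rfl, hl, hl₁⟩
    · refine (ih _ hRS' (hw.mono hsdiff)).trans (mul_le_mul_of_nonneg_right ?_ hcD)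
      exact le_mul_of_one_le_left (by linarith) hp₁
    · rw [walk_append] at h
      have h2 := ih _ hRS (hclosed h.2 hl)
      rw [dest_append]
      refine h2.trans ?_
      rw [mul_assoc]
      refine mul_le_mul_of_nonneg_left ?_ (by linarith)
      rcases hl₁ with rfl | ⟨l₀, t, rfl, hl₀⟩
      · exact le_mul_of_one_le_left hcD hp₂
      · refine le_trans ?_ (ih _ hRS' (hl₀.mono hsdiff))
        rw [walk_append] at h
        have := coordMax_walkStep_le h.1.2.2.1 (dest (AddMonoidHom.id _) c l₀)
        rw [dest_append]
        simp only [dest_cons, dest_nil]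
        linarith

end Pumping

/-- Non-negative Cycle Lemma.  There is a polynomial `P` with
natural coefficients such that every run of a 2-VASS `V` (with `n` states and
norm `M`) from a (0,0)-configuration to a target configuration of norm larger
than `P(nM)ⁿ` contains a configuration enabling a semi-positive cycle of
length at most `P(nM)`. -/
theorem nonneg_cycle_lemma :
    ∃ P : Polynomial ℕ, ∀ (n : ℕ) (V : VASS n) (π : List (Transition n)) (q : Fin n),
      IsRun V π q 0 →
      (P.eval (n * vassNorm V)) ^ n < vnorm (vecAt π 0 π.length) →
      ∃ i ≤ π.length, ∃ γ : List (Transition n),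
        IsCycle V γ ∧ Enabled γ (stateAt π q i) (vecAt π 0 i) ∧
        SemiPos (effect γ) ∧ γ.length ≤ P.eval (n * vassNorm V) := by
  let L₁ : Polynomial ℕ := 3 * .X + 4 * .X * (3 * .X + 1) * .X
  let L : Polynomial ℕ := L₁ * .X
  let D : Polynomial ℕ := 2 * L * .X + 4 * .X + 2 * .X * .X
  refine ⟨(2 * .X + 3) * D + L, fun n V π q hrun hnorm => ?_⟩
  by_contra! hno
  obtain ⟨K, hK⟩ : ∃ K, K = n * vassNorm V := ⟨_, rfl⟩
  obtain ⟨a, ha⟩ : ∃ a, a = L₁.eval K := ⟨_, rfl⟩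
  have haval : a = 3 * K + 4 * K * (3 * K + 1) * K := by simp [ha, L₁]
  have hLval : L.eval K = a * K := by simp [L, ha]
  have hDval : D.eval K = 2 * (a * K) * K + 4 * K + 2 * K * K := by simp [D, hLval]
  obtain ⟨b, hb⟩ : ∃ b, b = D.eval K := ⟨_, rfl⟩
  have hPval : ((2 * .X + 3) * D + L : Polynomial ℕ).eval K = (2 * K + 3) * b + a * K := by
    simp [hLval, hb]
  rw [← hb] at hDval
  rw [← hK, hPval] at hnorm hno
  have hn : 1 ≤ n := by have := q.isLt; omega
  have hM : 1 ≤ vassNorm V := by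
    by_contra! hM
    have hzero : ∀ {X Y : Vec2 →+ ℤ}, IsCoordPair X Y → X (effect π) = 0 := fun hXY => by
      have := hXY.abs_effect_le hrun.1.1
      rw [Nat.lt_one_iff.1 hM] at this
      simpa using this
    have h1 : (effect π).1 = 0 := hzero IsCoordPair.fst_snd
    have h2 : (effect π).2 = 0 := hzero IsCoordPair.fst_snd.symm
    simp [vecAt, vnorm, h1, h2] at hnorm
  have hnK : n ≤ K := hK ▸ Nat.le_mul_of_pos_right n hM
  have hMK : vassNorm V ≤ K := hK ▸ Nat.le_mul_of_pos_left _ hn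
  have hK1 : 1 ≤ K := hn.trans hnK
  have hdest : ∀ i, dest (AddMonoidHom.id _) (q, 0) (π.take i) = (stateAt π q i, vecAt π 0 i) := by
    intro i
    refine Prod.ext ?_ ?_
    · rw [dest_fst]; rfl
    · rw [dest_snd]; rfl
  have hwalk : Walk V (AddMonoidHom.id _) (Unpumped V (a * K) Finset.univ) (q, 0) π := by
    refine Walk.of_isPath hrun.1 hrun.2.1 fun i hi => ?_
    rw [hdest]
    refine ⟨Finset.mem_univ _, hrun.2.2 i hi, ?_⟩
    rintro ⟨γ, h1, h2, h3, h4⟩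
    exact absurd (h4.trans (Nat.le_add_left _ _)) (not_le.2 (hno i hi γ h1 h2 h3))
  have haL : a ≤ a * K := Nat.le_mul_of_pos_right a hK1
  have key := hwalk.growth hK hK1 (L₁ := a) (D := b) (by rw [haval]; gcongr) haL
    (by rw [hK]; exact le_of_eq (by ring)) (by
      have : n * 2 ≤ a := by
        rw [haval]
        have := Nat.zero_le (4 * K * (3 * K + 1) * K)
        omega
      rw [← mul_assoc]
      exact Nat.mul_le_mul_right K this) (by
      rw [hDval]; push_cast
      have h1 : (vassNorm V : ℤ) ≤ K := by exact_mod_cast hMK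
      have h2 : 2 * ((a : ℤ) * K) * vassNorm V ≤ 2 * (a * K) * K :=
        mul_le_mul_of_nonneg_left h1 (by positivity)
      nlinarith) (by
      rw [hDval]; push_cast
      have : (0 : ℤ) ≤ 2 * (a * K) * K + 4 * K := by positivity
      linarith)
  have hend := hdest π.length
  rw [List.take_length] at hend
  rw [hend, Finset.card_univ, Fintype.card_fin] at key
  have hnn := hrun.2.2 π.length le_rfl
  have hcast : ((vnorm (vecAt π 0 π.length) : ℕ) : ℤ) = coordMax (vecAt π 0 π.length) := by
    simp [vnorm, coordMax, abs_of_nonneg hnn.1, abs_of_nonneg hnn.2]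
  have hb1 : 1 ≤ b := by rw [hDval]; nlinarith
  have hle : vnorm (vecAt π 0 π.length) ≤ (2 * K + 3) ^ n * b := by
    have : coordMax ((q, 0) : Fin n × Vec2).2 = 0 := by simp [coordMax]
    rw [this, ← hcast] at key
    zify
    linarith
  refine absurd hnorm (not_lt.2 (hle.trans ?_))
  calc (2 * K + 3) ^ n * b ≤ (2 * K + 3) ^ n * b ^ n := by
        gcongr; exact Nat.le_self_pow (by omega) b
    _ = ((2 * K + 3) * b) ^ n := (mul_pow _ _ _).symm
    _ ≤ ((2 * K + 3) * b + a * K) ^ n := by gcongr; exact Nat.le_add_right _ _
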